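/- Let a, b, c be the permutations of {0,…,6} given in cycle notation by a = (0 1)(2 5), b = (0 2)(4 3), c = (0 4)(1 6), and a' = (0 4)(2 3), b' = (0 1)(4 6), c' = (0 2)(1 5). Let G be the subgroup of Sym(7) × Sym(7) generated by (a,a'), (b,b'), (c,c'), let A = {(σ,τ) ∈ G : σ(0) = 0} and B = {(σ,τ) ∈ G : τ(0) = 0}. Then A and B are Gassmann equivalent subgroups of G (for every conjugacy class C of G, |A ∩ C| = |B ∩ C|), but A and B are not conjugate in G. -/

import Mathlib

open Equiv

/-- a = (0 1)(2 5) -/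
def a : Perm (Fin 7) := swap 0 1 * swap 2 5
/-- b = (0 2)(4 3) -/
def b : Perm (Fin 7) := swap 0 2 * swap 4 3
/-- c = (0 4)(1 6) -/
def c : Perm (Fin 7) := swap 0 4 * swap 1 6
/-- a' = (0 4)(2 3) -/
def a' : Perm (Fin 7) := swap 0 4 * swap 2 3
/-- b' = (0 1)(4 6) -/
def b' : Perm (Fin 7) := swap 0 1 * swap 4 6
/-- c' = (0 2)(1 5) -/
def c' : Perm (Fin 7) := swap 0 2 * swap 1 5

/-- The subgroup of Sym(7) × Sym(7) generated by (a,a'), (b,b'), (c,c'). -/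
def G₀ : Subgroup (Perm (Fin 7) × Perm (Fin 7)) :=
  Subgroup.closure {(a, a'), (b, b'), (c, c')}

/-- A = {(σ,τ) ∈ G₀ : σ 0 = 0}, the point stabilizer in the first action. -/
def A : Subgroup G₀ where
  carrier := {g | (g : Perm (Fin 7) × Perm (Fin 7)).1 0 = 0}
  one_mem' := rfl
  mul_mem' := by
    intro x y hx hy
    simp only [Set.mem_setOf_eq] at *
    simp [Subgroup.coe_mul, Perm.mul_apply, hx, hy]
  inv_mem' := by
    intro x hx
    simp only [Set.mem_setOf_eq] at *
    conv_lhs => rw [← hx]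
    simp

/-- B = {(σ,τ) ∈ G₀ : τ 0 = 0}, the point stabilizer in the second action. -/
def B : Subgroup G₀ where
  carrier := {g | (g : Perm (Fin 7) × Perm (Fin 7)).2 0 = 0}
  one_mem' := rfl
  mul_mem' := by
    intro x y hx hy
    simp only [Set.mem_setOf_eq] at *
    simp [Subgroup.coe_mul, Perm.mul_apply, hx, hy]
  inv_mem' := by
    intro x hx
    simp only [Set.mem_setOf_eq] at *
    conv_lhs => rw [← hx]
    simp

/-- Incidence between the points and the lines of the Fano plane on which `G₀` acts. -/
def incM (i j : Fin 7) : ℤ :=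
  if (i, j) ∈ [((0 : Fin 7), (1 : Fin 7)), (0, 2), (0, 4), (1, 0), (1, 1), (1, 3), (2, 0), (2, 2),
    (2, 6), (3, 1), (3, 5), (3, 6), (4, 0), (4, 4), (4, 5), (5, 3), (5, 4), (5, 6), (6, 2), (6, 3),
    (6, 5)] then 1 else 0

/-- Six times the inverse of the incidence matrix. -/
def incK (j i : Fin 7) : ℤ := 3 * incM i j - 1

theorem incMK : ∀ x y : Fin 7, ∑ j, incM x j * incK j y = if x = y then 6 else 0 := by decide

theorem incKM : ∀ x y : Fin 7, ∑ i, incM i y * incK x i = if x = y then 6 else 0 := by decide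

theorem memGa : (a, a') ∈ G₀ := Subgroup.subset_closure (by simp)
theorem memGb : (b, b') ∈ G₀ := Subgroup.subset_closure (by simp)
theorem memGc : (c, c') ∈ G₀ := Subgroup.subset_closure (by simp)

theorem inc_inv (x : Perm (Fin 7) × Perm (Fin 7)) (hx : x ∈ G₀) :
    ∀ i j, incM (x.1 i) (x.2 j) = incM i j := by
  unfold G₀ at hx
  induction hx using Subgroup.closure_induction with
  | mem x hx =>
    simp only [Set.mem_insert_iff, Set.mem_singleton_iff] at hx
    rcases hx with rfl | rfl | rfl <;> decide
  | one => intro i j; rfl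
  | mul x y _ _ h1 h2 => intro i j; simp [h1, h2]
  | inv x _ h => intro i j; rw [← h]; simp

/-- The two permutation characters agree. -/
theorem fix_eq (x : G₀) :
    (∑ i, if x.1.1 i = i then 1 else 0 : ℕ) = ∑ j, if x.1.2 j = j then 1 else 0 := by
  have h := inc_inv x.1 x.2
  have key : (∑ i, if x.1.1 i = i then 6 else 0 : ℤ) = ∑ j, if x.1.2 j = j then 6 else 0 := by
    calc (∑ i, if x.1.1 i = i then 6 else 0 : ℤ)
        = ∑ i, ∑ j, incM (x.1.1 i) j * incK j i := by simp only [incMK]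
      _ = ∑ i, ∑ j, incM i j * incK (x.1.2 j) i := by
          refine Finset.sum_congr rfl fun i _ => ?_
          rw [← Equiv.sum_comp x.1.2]
          simp only [h]
      _ = ∑ j, ∑ i, incM i j * incK (x.1.2 j) i := Finset.sum_comm
      _ = _ := by simp only [incKM]
  have e : ∀ f : Perm (Fin 7), (∑ i, if f i = i then 6 else 0 : ℤ)
      = 6 * ((∑ i, if f i = i then 1 else 0 : ℕ) : ℤ) := by
    intro f
    push_cast
    rw [Finset.mul_sum]
    simp
  rw [e, e] at key
  exact_mod_cast mul_left_cancel₀ (by norm_num) key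

/-- Double counting of fixed points over a conjugacy class, for a transitive action on `Fin 7`. -/
theorem count_class (φ : G₀ →* Perm (Fin 7)) (htr : ∀ i, ∃ h, φ h 0 = i) (g : G₀) :
    7 * Nat.card {x : G₀ | φ x 0 = 0 ∧ IsConj g x} =
      ∑ᶠ x ∈ {x : G₀ | IsConj g x}, ∑ i, if φ x i = i then 1 else 0 := by
  classical
  have : Fintype G₀ := Fintype.ofFinite _
  have hi : ∀ i, Nat.card {x : G₀ | φ x i = i ∧ IsConj g x} =
      Nat.card {x : G₀ | φ x 0 = 0 ∧ IsConj g x} := by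
    intro i
    obtain ⟨h, hh⟩ := htr i
    symm
    refine Nat.card_congr ((MulAut.conj h).toEquiv.subtypeEquiv fun x => ?_)
    have h0 : (φ h)⁻¹ i = 0 := by rw [← hh]; simp
    have hc : IsConj x (h * x * h⁻¹) := isConj_iff.2 ⟨h, rfl⟩
    simp only [Set.mem_ofPred_eq, MulEquiv.toEquiv_eq_coe, MulEquiv.coe_toEquiv,
      MulAut.conj_apply]
    refine and_congr ?_ ⟨fun k => k.trans hc, fun k => k.trans hc.symm⟩
    rw [map_mul, map_mul, map_inv, Perm.mul_apply, Perm.mul_apply, h0]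
    rw [← hh]
    exact (φ h).injective.eq_iff.symm
  have hs : 7 * Nat.card {x : G₀ | φ x 0 = 0 ∧ IsConj g x} =
      ∑ i : Fin 7, Nat.card {x : G₀ | φ x i = i ∧ IsConj g x} := by
    rw [Finset.sum_congr rfl fun i _ => hi i, Finset.sum_const]
    rfl
  rw [hs, finsum_mem_eq_finite_toFinset_sum _ (Set.toFinite _), Finset.sum_comm]
  refine Finset.sum_congr rfl fun i _ => ?_
  rw [← Finset.card_filter, Nat.card_eq_card_toFinset]
  congr 1
  ext x
  simp [and_comm]

theorem trans_fst (i : Fin 7) : ∃ h : G₀, h.1.1 0 = i := by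
  have A1 := memGa
  have B1 := memGb
  have C1 := memGc
  fin_cases i
  · exact ⟨1, rfl⟩
  · exact ⟨⟨_, A1⟩, rfl⟩
  · exact ⟨⟨_, B1⟩, rfl⟩
  · exact ⟨⟨_, mul_mem B1 C1⟩, rfl⟩
  · exact ⟨⟨_, C1⟩, rfl⟩
  · exact ⟨⟨_, mul_mem A1 B1⟩, rfl⟩
  · exact ⟨⟨_, mul_mem C1 A1⟩, rfl⟩

theorem trans_snd (i : Fin 7) : ∃ h : G₀, h.1.2 0 = i := by
  have A1 := memGa
  have B1 := memGb
  have C1 := memGc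
  fin_cases i
  · exact ⟨1, rfl⟩
  · exact ⟨⟨_, B1⟩, rfl⟩
  · exact ⟨⟨_, C1⟩, rfl⟩
  · exact ⟨⟨_, mul_mem A1 C1⟩, rfl⟩
  · exact ⟨⟨_, A1⟩, rfl⟩
  · exact ⟨⟨_, mul_mem C1 B1⟩, rfl⟩
  · exact ⟨⟨_, mul_mem B1 A1⟩, rfl⟩

/-- The point stabilizer `A` fixes no line. -/
theorem no_fix (j : Fin 7) (h : ∀ y ∈ A, y.1.2 j = j) : False := by
  have h1 := h ⟨_, mul_mem (mul_mem memGa memGb) memGa⟩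
    (show (a * b * a) 0 = 0 by decide)
  have h2 := h ⟨_, mul_mem (mul_mem memGb memGc) memGb⟩
    (show (b * c * b) 0 = 0 by decide)
  have h3 := h ⟨_, mul_mem (mul_mem memGc memGa) memGc⟩
    (show (c * a * c) 0 = 0 by decide)
  change (a' * b' * a') j = j at h1
  change (b' * c' * b') j = j at h2
  change (c' * a' * c') j = j at h3
  clear h
  revert j
  decide

/-- `A` and `B` are Gassmann equivalent subgroups of `G₀`, but they are not conjugate. -/
theorem gassmann_not_conjugate :
    (∀ g : G₀,
      Nat.card ((A : Set G₀) ∩ {x : G₀ | IsConj g x} : Set G₀) =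
      Nat.card ((B : Set G₀) ∩ {x : G₀ | IsConj g x} : Set G₀)) ∧
    ¬ ∃ x : G₀, Subgroup.map (MulAut.conj x).toMonoidHom A = B := by
  constructor
  · intro g
    have h1 := count_class ((MonoidHom.fst _ _).comp G₀.subtype) trans_fst g
    have h2 := count_class ((MonoidHom.snd _ _).comp G₀.subtype) trans_snd g
    have h3 : 7 * Nat.card ((A : Set G₀) ∩ {x : G₀ | IsConj g x} : Set G₀) =
        7 * Nat.card ((B : Set G₀) ∩ {x : G₀ | IsConj g x} : Set G₀) := by
      refine (h1.trans ?_).trans h2.symm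
      exact finsum_congr fun x => finsum_congr fun _ => fix_eq x
    omega
  · rintro ⟨x, hx⟩
    refine no_fix ((x.1.2)⁻¹ 0) fun y hy => ?_
    have hm : x * y * x⁻¹ ∈ B := by
      rw [← hx]
      exact ⟨y, hy, rfl⟩
    have hm' : x.1.2 (y.1.2 ((x.1.2)⁻¹ 0)) = 0 := hm
    rw [Perm.eq_inv_iff_eq]
    exact hm'
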